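/- Let X be a random vector with values in EuclideanSpace ℝ (Fin n) whose distribution is the multivariate Gaussian measure with mean vector μ and symmetric positive semidefinite covariance matrix C. Then there exists ε > 0 such that for all real t with |t| < ε, log(E[exp(t·‖X‖²)]) = ∑_{j=1}^∞ 2^(j−1)·(j−1)!·(trace(C^j) + j·⟪μ, C^(j−1) μ⟫)·t^j/j!, with the series converging. In particular, the j-th cumulant of ‖X‖² is 2^(j−1)·(j−1)!·(trace(C^j) + j·⟪μ, C^(j−1) μ⟫). -/

import Mathlib

open MeasureTheory ProbabilityTheory
open scoped RealInnerProductSpace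

/-- `X` is a random vector whose law is the multivariate Gaussian measure with mean `μ` and
covariance matrix `C`: every one-dimensional projection `⟪X, v⟫` is Gaussian with mean `⟪μ, v⟫`
and variance `⟪C v, v⟫`. -/
def IsMultivariateGaussian {Ω : Type*} [MeasurableSpace Ω] {n : ℕ}
    (P : Measure Ω) (X : Ω → EuclideanSpace ℝ (Fin n))
    (μ : EuclideanSpace ℝ (Fin n)) (C : Matrix (Fin n) (Fin n) ℝ) : Prop :=
  Measurable X ∧
    ∀ v : EuclideanSpace ℝ (Fin n),
      P.map (fun ω => ⟪X ω, v⟫) =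
        gaussianReal ⟪μ, v⟫ (⟪Matrix.toEuclideanLin C v, v⟫).toNNReal

lemma gauss_exp_sq (m t : ℝ) (v : NNReal) (h : 2 * (v : ℝ) * t < 1) :
    ∫ y, Real.exp (t * y ^ 2) ∂(gaussianReal m v) =
      (Real.sqrt (1 - 2 * v * t))⁻¹ * Real.exp (t * m ^ 2 / (1 - 2 * v * t)) := by
  by_cases hv : v = 0
  · subst hv
    simp
  have hv' : (0 : ℝ) < v := by positivity
  have hd : 0 < 1 - 2 * (v : ℝ) * t := by linarith
  rw [integral_gaussianReal_eq_integral_smul hv]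
  have key : ∀ y : ℝ, gaussianPDFReal m v y • Real.exp (t * y ^ 2) =
      ((Real.sqrt (2 * Real.pi * v))⁻¹ * Real.exp (t * m ^ 2 / (1 - 2 * v * t))) *
        Real.exp (-((1 - 2 * v * t) / (2 * v)) * (y - m / (1 - 2 * v * t)) ^ 2) := by
    intro y
    rw [gaussianPDFReal, smul_eq_mul, mul_assoc _ (Real.exp _), mul_assoc _ (Real.exp _),
      ← Real.exp_add, ← Real.exp_add]
    congr 2
    field_simp
    ring
  simp_rw [key]
  rw [integral_const_mul,
    integral_sub_right_eq_self (fun y => Real.exp (-((1 - 2 * v * t) / (2 * v)) * y ^ 2)),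
    integral_gaussian]
  have e : Real.pi / ((1 - 2 * v * t) / (2 * v)) = (2 * Real.pi * v) / (1 - 2 * v * t) := by
    field_simp
  have hp : Real.sqrt (2 * Real.pi * v) ≠ 0 := by positivity
  rw [e, Real.sqrt_div (by positivity)]
  field_simp

lemma log_gauss_hasSum (m t : ℝ) (v : NNReal) (h : |2 * (v : ℝ) * t| < 1) :
    HasSum (fun k : ℕ => 2 ^ k * (Nat.factorial k : ℝ) *
        ((v : ℝ) ^ (k + 1) + ((k : ℝ) + 1) * ((v : ℝ) ^ k * m ^ 2)) *
          t ^ (k + 1) / (Nat.factorial (k + 1) : ℝ))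
      (Real.log (∫ y, Real.exp (t * y ^ 2) ∂(gaussianReal m v))) := by
  have h1 := (abs_lt.1 h).2
  have hd : 0 < 1 - 2 * (v : ℝ) * t := by linarith
  rw [gauss_exp_sq m t v h1, Real.log_mul (by positivity) (by positivity), Real.log_exp,
    Real.log_inv, Real.log_sqrt hd.le]
  have s1 := (Real.hasSum_pow_div_log_of_abs_lt_one h).mul_left (1 / 2)
  have s2 := (hasSum_geometric_of_abs_lt_one h).mul_left (t * m ^ 2)
  have e2 : -(Real.log (1 - 2 * v * t) / 2) + t * m ^ 2 / (1 - 2 * v * t) =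
      1 / 2 * -Real.log (1 - 2 * v * t) + t * m ^ 2 * (1 - 2 * v * t)⁻¹ := by ring
  rw [e2]
  have s3 := s1.add s2
  refine (congrArg (fun f => HasSum f _) (funext fun k => ?_)).mpr s3

  rw [Nat.factorial_succ]
  push_cast
  have : (Nat.factorial k : ℝ) ≠ 0 := by positivity
  field_simp
  ring

lemma eig_pow {n : ℕ} (C : Matrix (Fin n) (Fin n) ℝ) (hC : C.IsHermitian) (k : ℕ) (i : Fin n) :
    Matrix.toEuclideanLin (C ^ k) (hC.eigenvectorBasis i) =
      hC.eigenvalues i ^ k • hC.eigenvectorBasis i := by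
  have h1 : Matrix.toEuclideanLin C (hC.eigenvectorBasis i) =
      hC.eigenvalues i • hC.eigenvectorBasis i := by
    rw [Matrix.toEuclideanLin_apply, hC.mulVec_eigenvectorBasis]
    rfl
  rw [Matrix.toLpLin_pow]
  induction k with
  | zero => simp
  | succ k ih =>
    rw [pow_succ, Module.End.mul_apply, h1, map_smul, ih, smul_smul, pow_succ, mul_comm]

lemma inner_pow {n : ℕ} (C : Matrix (Fin n) (Fin n) ℝ) (hC : C.IsHermitian) (k : ℕ)
    (x : EuclideanSpace ℝ (Fin n)) :
    ⟪x, Matrix.toEuclideanLin (C ^ k) x⟫ =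
      ∑ i, hC.eigenvalues i ^ k * ⟪x, hC.eigenvectorBasis i⟫ ^ 2 := by
  conv_lhs => rw [← hC.eigenvectorBasis.sum_repr' x]
  rw [map_sum, inner_sum]
  refine Finset.sum_congr rfl fun i _ => ?_
  rw [hC.eigenvectorBasis.sum_repr' x, map_smul, eig_pow, inner_smul_right, inner_smul_right,
    real_inner_comm]
  ring

lemma trace_pow' {n : ℕ} (C : Matrix (Fin n) (Fin n) ℝ) (hC : C.IsHermitian) (k : ℕ) :
    Matrix.trace (C ^ k) = ∑ i, hC.eigenvalues i ^ k := by
  have h : LinearMap.trace ℝ _ (Matrix.toEuclideanLin (C ^ k)) = Matrix.trace (C ^ k) := by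
    rw [Matrix.toEuclideanLin_eq_toLin, Matrix.trace_toLin_eq]
  rw [← h, LinearMap.trace_eq_sum_inner _ hC.eigenvectorBasis]
  refine Finset.sum_congr rfl fun i _ => ?_
  rw [eig_pow, inner_smul_right]
  simp

lemma map_coords {Ω : Type*} [MeasurableSpace Ω] {n : ℕ}
    (P : Measure Ω) [IsProbabilityMeasure P]
    (X : Ω → EuclideanSpace ℝ (Fin n))
    (μ : EuclideanSpace ℝ (Fin n)) (C : Matrix (Fin n) (Fin n) ℝ)
    (hC : C.PosSemidef)
    (hX : IsMultivariateGaussian P X μ C) :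
    P.map (fun ω => fun i => ⟪X ω, hC.1.eigenvectorBasis i⟫) =
      Measure.pi (fun i => gaussianReal ⟪μ, hC.1.eigenvectorBasis i⟫
        (hC.1.eigenvalues i).toNNReal) := by
  obtain ⟨hm, hX⟩ := hX
  have hmeas : Measurable (fun ω => fun i => ⟪X ω, hC.1.eigenvectorBasis i⟫) := by fun_prop
  refine (MeasurableEquiv.toLp 2 (Fin n → ℝ)).map_measurableEquiv_injective
      <| Measure.ext_of_charFun (E := EuclideanSpace ℝ (Fin n)) <| funext fun t ↦ ?_
  rw [MeasurableEquiv.coe_toLp, charFun_pi]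
  simp_rw [charFun_gaussianReal]
  rw [← Complex.exp_sum, Measure.map_map (by fun_prop) hmeas]
  set v : EuclideanSpace ℝ (Fin n) := ∑ i, t i • hC.1.eigenvectorBasis i with hv
  have hvi : ∀ i, ⟪v, hC.1.eigenvectorBasis i⟫ = t i := by
    intro i
    rw [hv, sum_inner]
    simp [inner_smul_left, hC.1.eigenvectorBasis.inner_eq_ite]
  have hxv : ∀ x, ⟪x, v⟫ = ∑ i, t i * ⟪x, hC.1.eigenvectorBasis i⟫ := by
    intro x
    simp [hv, inner_sum, inner_smul_right]
  have h1 : charFun (P.map (fun ω => ⟪X ω, v⟫)) 1 = charFun (P.map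
      ((WithLp.toLp 2) ∘ fun ω => fun i => ⟪X ω, hC.1.eigenvectorBasis i⟫)) t := by
    rw [charFun_apply, charFun_apply, integral_map (by fun_prop) (by fun_prop),
      integral_map (by fun_prop) (by fun_prop)]
    simp [hxv, PiLp.inner_apply]
  rw [← h1, hX, charFun_gaussianReal]
  have h2 : ⟪Matrix.toEuclideanLin C v, v⟫ = ∑ i, hC.1.eigenvalues i * t i ^ 2 := by
    rw [real_inner_comm]
    have := inner_pow C hC.1 1 v
    simpa [hvi] using this
  have h3 : 0 ≤ ∑ i, hC.1.eigenvalues i * t i ^ 2 :=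
    Finset.sum_nonneg fun i _ => mul_nonneg (hC.eigenvalues_nonneg i) (sq_nonneg _)
  rw [h2, hxv, Real.coe_toNNReal _ h3]
  congr 1
  rw [Finset.sum_sub_distrib]
  simp_rw [Real.coe_toNNReal _ (hC.eigenvalues_nonneg _)]
  push_cast
  rw [Finset.sum_mul, Finset.sum_div, ]
  simp [Finset.mul_sum, Finset.sum_mul]

theorem cgf_norm_sq_gaussian
    {Ω : Type*} [MeasurableSpace Ω] {n : ℕ}
    (P : Measure Ω) [IsProbabilityMeasure P]
    (X : Ω → EuclideanSpace ℝ (Fin n))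
    (μ : EuclideanSpace ℝ (Fin n)) (C : Matrix (Fin n) (Fin n) ℝ)
    (hC : C.PosSemidef)
    (hX : IsMultivariateGaussian P X μ C) :
    ∃ ε > (0 : ℝ), ∀ t : ℝ, |t| < ε →
      HasSum
        (fun k : ℕ =>
          2 ^ k * (Nat.factorial k : ℝ) *
            (Matrix.trace (C ^ (k + 1)) +
              ((k : ℝ) + 1) * ⟪μ, Matrix.toEuclideanLin (C ^ k) μ⟫) *
            t ^ (k + 1) / (Nat.factorial (k + 1) : ℝ))
        (Real.log (∫ ω, Real.exp (t * ‖X ω‖ ^ 2) ∂P)) := by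
  
  have hb := hC.1.eigenvectorBasis
  have hl := hC.eigenvalues_nonneg
  have hS : 0 ≤ ∑ i, hC.1.eigenvalues i := Finset.sum_nonneg fun i _ => hl i
  refine ⟨(1 + 2 * ∑ i, hC.1.eigenvalues i)⁻¹, by positivity, fun t ht => ?_⟩
  have hsmall : ∀ i, |2 * ((hC.1.eigenvalues i).toNNReal : ℝ) * t| < 1 := by
    intro i
    rw [Real.coe_toNNReal _ (hl i), abs_mul, abs_of_nonneg (by have := hl i; positivity)]
    have h1 : hC.1.eigenvalues i ≤ ∑ i, hC.1.eigenvalues i :=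
      Finset.single_le_sum (fun i _ => hl i) (Finset.mem_univ i)
    have h2 : |t| * (1 + 2 * ∑ i, hC.1.eigenvalues i) < 1 := by
      rwa [← lt_div_iff₀ (by positivity), one_div]
    nlinarith [abs_nonneg t]
  have hint : ∫ ω, Real.exp (t * ‖X ω‖ ^ 2) ∂P =
      ∏ i, ∫ y, Real.exp (t * y ^ 2) ∂(gaussianReal ⟪μ, hC.1.eigenvectorBasis i⟫
        (hC.1.eigenvalues i).toNNReal) := by
    have hm := hX.1
    rw [← integral_fintype_prod_eq_prod (fun _ y => Real.exp (t * y ^ 2)),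
      ← map_coords P X μ C hC hX, integral_map (by fun_prop)
        (Continuous.aestronglyMeasurable (by fun_prop))]
    refine integral_congr_ae (ae_of_all _ fun ω => ?_)
    simp only
    rw [← Real.exp_sum, ← Finset.mul_sum, ← hC.1.eigenvectorBasis.sum_sq_norm_inner_left (X ω)]
    simp
  rw [hint, Real.log_prod]
  · have := hasSum_sum (s := Finset.univ) fun i _ =>
      log_gauss_hasSum ⟪μ, hC.1.eigenvectorBasis i⟫ t _ (hsmall i)
    convert this using 1
    funext k
    simp_rw [Real.coe_toNNReal _ (hl _)]
    rw [trace_pow' C hC.1, inner_pow C hC.1, Finset.mul_sum, ← Finset.sum_add_distrib,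
      Finset.mul_sum, Finset.sum_mul, Finset.sum_div]
  · intro i _
    rw [gauss_exp_sq _ _ _ (abs_lt.1 (hsmall i)).2]
    have := (abs_lt.1 (hsmall i)).2
    have : 0 < 1 - 2 * ((hC.1.eigenvalues i).toNNReal : ℝ) * t := by linarith
    positivity
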